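/- Assume α > 1, λ is nondecreasing on [t₀,∞), b(t) > β'(t) + β(t)/t (equivalently w(t) > 0) for every t ≥ t₀, and there exists ε ∈ (0, α−1) such that (α−3)·w(t) − t·w'(t) ≥ ε·b(t) for every t ≥ t₀. Then ∫_{t₀}^{∞} t·‖ẋ(t)‖² dt < +∞. -/

import Mathlib

open Set MeasureTheory Filter Real

noncomputable section

/-- Convexity for extended-real-valued functions. -/
def EConvexOn {H : Type*} [NormedAddCommGroup H] [NormedSpace ℝ H] (f : H → EReal) : Prop :=
  ∀ x y : H, ∀ a c : ℝ, 0 ≤ a → 0 ≤ c → a + c = 1 →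
    f (a • x + c • y) ≤ (a : EReal) * f x + (c : EReal) * f y

/-- `p` is the proximal point of `f` with parameter `l` at `x`, i.e. the (unique) minimizer of
`y ↦ f y + ‖x - y‖² / (2l)`. -/
def IsProxPt {H : Type*} [NormedAddCommGroup H] [InnerProductSpace ℝ H]
    (f : H → EReal) (l : ℝ) (x p : H) : Prop :=
  ∀ y : H, f p + ((‖x - p‖ ^ 2 / (2 * l) : ℝ) : EReal)
      ≤ f y + ((‖x - y‖ ^ 2 / (2 * l) : ℝ) : EReal)

/-- The Moreau envelope of `f` with parameter `l` (as a real number). -/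
def moreau {H : Type*} [NormedAddCommGroup H] [InnerProductSpace ℝ H]
    (f : H → EReal) (l : ℝ) (x : H) : ℝ :=
  (⨅ y : H, f y + ((‖x - y‖ ^ 2 / (2 * l) : ℝ) : EReal)).toReal

/-! Write `φ(t) = Φ_{λ(t)}(x(t)) - Φ*`, `g(t) = ∇Φ_{λ(t)}(x(t))`, and let `z` be a minimizer of `Φ`.
As `λ` is nondecreasing, `φ' = ⟪g, ẋ⟫ - (λ'/2)‖g‖² ≤ ⟪g, ẋ⟫`, and convexity gives
`0 ≤ φ ≤ ⟪g, x - z⟫`. With `c = α - 1 - ε`, the momentum `u = c(x - z) + tẋ + tβg` satisfies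
`u' = -εẋ - twg`: the acceleration has disappeared. Consequently the nonnegative energy
`(t²w + εtβ)φ + ‖u‖²/2 + (cε/2)‖x - z‖²` decreases at rate at least `εt‖ẋ‖²`, and integrating this
bound gives the claim. -/

open scoped Topology

section Calculus

theorem hasDerivWithinAt_of_le_of_le {f m M : ℝ → ℝ} {d t : ℝ} {S : Set ℝ}
    (hm : HasDerivWithinAt m d S t) (hM : HasDerivWithinAt M d S t)
    (hmf : m ≤ᶠ[𝓝[S] t] f) (hfM : f ≤ᶠ[𝓝[S] t] M) (hmt : m t = f t) (hMt : M t = f t) :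
    HasDerivWithinAt f d S t := by
  rw [hasDerivWithinAt_iff_isLittleO, Asymptotics.isLittleO_iff] at *
  intro c hc
  filter_upwards [hm hc, hM hc, hmf, hfM] with s lower upper hms hMs
  rw [hmt, Real.norm_eq_abs, abs_le] at lower
  rw [hMt, Real.norm_eq_abs, abs_le] at upper
  rw [Real.norm_eq_abs, abs_le]
  constructor <;> linarith [lower.1, upper.2]

theorem integrableOn_Ici_of_le_neg_deriv {E E' f : ℝ → ℝ} {a m : ℝ}
    (hE : ∀ t ≥ a, HasDerivWithinAt E (E' t) (Ici a) t) (hm : ∀ t ≥ a, m ≤ E t)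
    (hf : LocallyIntegrableOn f (Ici a)) (hf₀ : ∀ t ≥ a, 0 ≤ f t)
    (hfE : ∀ t ≥ a, f t ≤ -E' t) : IntegrableOn f (Ici a) := by
  have integrable_Icc (T : ℝ) : IntegrableOn f (Icc a T) :=
    hf.integrableOn_compact_subset Icc_subset_Ici_self isCompact_Icc
  have integral_norm_le (T : ℝ) (hT : a ≤ T) : ∫ t in a..T, ‖f t‖ ≤ E a - m :=
    calc ∫ t in a..T, ‖f t‖ = ∫ t in a..T, f t := by
          refine intervalIntegral.integral_congr fun t ht => ?_
          rw [uIcc_of_le hT] at ht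
          exact Real.norm_of_nonneg (hf₀ t ht.1)
      _ ≤ -E T - -E a :=
          intervalIntegral.integral_le_sub_of_hasDeriv_right_of_le hT
            (fun t ht => (hE t ht.1).neg.continuousWithinAt.mono Icc_subset_Ici_self)
            (fun t ht => (hE t ht.1.le).neg.mono fun s hs => ht.1.le.trans (le_of_lt hs))
            (integrable_Icc T) fun t ht => hfE t ht.1.le
      _ ≤ E a - m := by linarith [hm T hT]
  rw [integrableOn_Ici_iff_integrableOn_Ioi]
  exact integrableOn_Ioi_of_intervalIntegral_norm_bounded (E a - m) a
    (fun T => (integrable_Icc T).mono_set Ioc_subset_Icc_self) tendsto_id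
    ((eventually_ge_atTop a).mono integral_norm_le)

end Calculus

section MoreauEnvelope

variable {H : Type*} [NormedAddCommGroup H] [InnerProductSpace ℝ H]
  {f : H → EReal} {l : ℝ} {x p y g : H}

theorem EConvexOn.toReal_le (hf : EConvexOn f) (hbot : ∀ y, f y ≠ ⊥) (hx : f x ≠ ⊤) (hy : f y ≠ ⊤)
    {a c : ℝ} (ha : 0 ≤ a) (hc : 0 ≤ c) (hac : a + c = 1) :
    f (a • x + c • y) ≠ ⊤ ∧ (f (a • x + c • y)).toReal ≤ a * (f x).toReal + c * (f y).toReal := by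
  have hle : f (a • x + c • y) ≤ ((a * (f x).toReal + c * (f y).toReal : ℝ) : EReal) := by
    have h := hf x y a c ha hc hac
    rw [← EReal.coe_toReal hx (hbot x), ← EReal.coe_toReal hy (hbot y)] at h
    exact_mod_cast h
  exact ⟨ne_top_of_le_ne_top (EReal.coe_ne_top _) hle,
    EReal.toReal_le_toReal hle (hbot _) (EReal.coe_ne_top _)⟩

namespace IsProxPt

theorem ne_top (hp : IsProxPt f l x p) (hy : f y ≠ ⊤) : f p ≠ ⊤ := by
  intro h
  have hle := hp y
  rw [h, EReal.top_add_coe, top_le_iff] at hle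
  exact (EReal.add_lt_top hy (EReal.coe_ne_top _)).ne hle

theorem moreau_eq (hp : IsProxPt f l x p) (hbot : f p ≠ ⊥) (htop : f p ≠ ⊤) :
    moreau f l x = (f p).toReal + ‖x - p‖ ^ 2 / (2 * l) := by
  have hinf : ⨅ y : H, f y + ((‖x - y‖ ^ 2 / (2 * l) : ℝ) : EReal)
      = f p + ((‖x - p‖ ^ 2 / (2 * l) : ℝ) : EReal) :=
    le_antisymm (iInf_le _ p) (le_iInf hp)
  rw [moreau, hinf, EReal.toReal_add htop hbot (EReal.coe_ne_top _) (EReal.coe_ne_bot _),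
    EReal.toReal_coe]

theorem moreau_le (hp : IsProxPt f l x p) (hbot : ∀ y, f y ≠ ⊥) (hy : f y ≠ ⊤) :
    moreau f l x ≤ (f y).toReal + ‖x - y‖ ^ 2 / (2 * l) := by
  have hpy := hp y
  rw [hp.moreau_eq (hbot p) (hp.ne_top hy)]
  rw [← EReal.coe_toReal (hp.ne_top hy) (hbot p), ← EReal.coe_toReal hy (hbot y)] at hpy
  exact_mod_cast hpy

-- Compare `p` with the competitor `(1 - s) • p + s • y` in the minimization defining `p`.
theorem inner_le_sub_add_mul (hp : IsProxPt f l x p) (hf : EConvexOn f) (hbot : ∀ y, f y ≠ ⊥)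
    (hy : f y ≠ ⊤) {s : ℝ} (hs : 0 < s) (hs1 : s ≤ 1) :
    inner ℝ (x - p) (y - p) / l ≤ (f y).toReal - (f p).toReal + s * (‖y - p‖ ^ 2 / (2 * l)) := by
  have hptop := hp.ne_top hy
  obtain ⟨hqtop, hq⟩ :=
    hf.toReal_le hbot hptop hy (sub_nonneg.2 hs1) hs.le (sub_add_cancel 1 s)
  have hmin := hp.moreau_le hbot hqtop
  rw [hp.moreau_eq (hbot p) hptop] at hmin
  have hexpand : ‖x - ((1 - s) • p + s • y)‖ ^ 2 / (2 * l) = ‖x - p‖ ^ 2 / (2 * l)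
      - s * (inner ℝ (x - p) (y - p) / l) + s * (s * (‖y - p‖ ^ 2 / (2 * l))) := by
    have : x - ((1 - s) • p + s • y) = (x - p) - s • (y - p) := by module
    rw [this, norm_sub_sq_real, norm_smul, inner_smul_right, mul_pow, Real.norm_eq_abs, sq_abs]
    ring
  rw [hexpand] at hmin
  refine le_of_mul_le_mul_left ?_ hs
  linarith

theorem inner_le_sub (hp : IsProxPt f l x p) (hf : EConvexOn f) (hbot : ∀ y, f y ≠ ⊥)
    (hy : f y ≠ ⊤) : inner ℝ (x - p) (y - p) / l ≤ (f y).toReal - (f p).toReal := by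
  have hcont : Continuous fun s : ℝ =>
      (f y).toReal - (f p).toReal + s * (‖y - p‖ ^ 2 / (2 * l)) := by fun_prop
  have hlim := (hcont.tendsto 0).mono_left (nhdsWithin_le_nhds (s := Ioi 0))
  rw [zero_mul, add_zero] at hlim
  refine ge_of_tendsto hlim ?_
  filter_upwards [Ioc_mem_nhdsGT (zero_lt_one : (0 : ℝ) < 1)] with s hs
  exact hp.inner_le_sub_add_mul hf hbot hy hs.1 hs.2

end IsProxPt

/-- `g` is the gradient `∇f_l(x) = (x - prox_{lf}(x)) / l` of the Moreau envelope of `f` at `x`,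
encoded by saying that `x - l • g` is the proximal point. -/
def IsMoreauGrad (f : H → EReal) (l : ℝ) (x g : H) : Prop :=
  IsProxPt f l x (x - l • g)

theorem IsProxPt.isMoreauGrad (hp : IsProxPt f l x p) (hl : l ≠ 0) :
    IsMoreauGrad f l x (l⁻¹ • (x - p)) := by
  rwa [IsMoreauGrad, smul_inv_smul₀ hl, sub_sub_cancel]

namespace IsMoreauGrad

theorem moreau_eq (hg : IsMoreauGrad f l x g) (hbot : ∀ y, f y ≠ ⊥) (hy : f y ≠ ⊤) :
    moreau f l x = (f (x - l • g)).toReal + l / 2 * ‖g‖ ^ 2 := by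
  rw [IsProxPt.moreau_eq hg (hbot _) (hg.ne_top hy), sub_sub_cancel, norm_smul, mul_pow,
    Real.norm_eq_abs, sq_abs]
  field_simp

theorem inner_le_sub (hg : IsMoreauGrad f l x g) (hf : EConvexOn f) (hbot : ∀ y, f y ≠ ⊥)
    (hy : f y ≠ ⊤) (hl : l ≠ 0) :
    inner ℝ g (y - (x - l • g)) ≤ (f y).toReal - (f (x - l • g)).toReal := by
  have h := IsProxPt.inner_le_sub hg hf hbot hy
  rwa [sub_sub_cancel, real_inner_smul_left, mul_div_cancel_left₀ _ hl] at h

theorem le_moreau (hg : IsMoreauGrad f l x g) (hbot : ∀ y, f y ≠ ⊥) (hl : 0 < l) {z : H}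
    (hz : ∀ y, f z ≤ f y) (hztop : f z ≠ ⊤) : (f z).toReal ≤ moreau f l x := by
  have hle := EReal.toReal_le_toReal (hz (x - l • g)) (hbot z) (hg.ne_top hztop)
  rw [hg.moreau_eq hbot hztop]
  exact le_add_of_le_of_nonneg hle (by positivity)

theorem moreau_sub_le_inner (hg : IsMoreauGrad f l x g) (hf : EConvexOn f) (hbot : ∀ y, f y ≠ ⊥)
    (hy : f y ≠ ⊤) (hl : 0 < l) : moreau f l x - (f y).toReal ≤ inner ℝ g (x - y) := by
  have hsub := hg.inner_le_sub hf hbot hy hl.ne'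
  have hexpand : inner ℝ g (y - (x - l • g)) = l * ‖g‖ ^ 2 - inner ℝ g (x - y) := by
    have : y - (x - l • g) = l • g - (x - y) := by abel
    rw [this, inner_sub_right, real_inner_smul_right, real_inner_self_eq_norm_sq]
  have : 0 ≤ l * ‖g‖ ^ 2 := by positivity
  rw [hg.moreau_eq hbot hy]
  linarith

-- The slack in this inequality is `l₂ / 2 * ‖g₂ - g₁‖ ^ 2`.
theorem moreau_add_inner_sub_le {l₁ l₂ : ℝ} {x₁ x₂ g₁ g₂ : H} (hg₁ : IsMoreauGrad f l₁ x₁ g₁)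
    (hg₂ : IsMoreauGrad f l₂ x₂ g₂) (hf : EConvexOn f) (hbot : ∀ y, f y ≠ ⊥) (hy : f y ≠ ⊤)
    (hl₁ : l₁ ≠ 0) (hl₂ : 0 < l₂) :
    moreau f l₁ x₁ + inner ℝ g₁ (x₂ - x₁) - (l₂ - l₁) / 2 * ‖g₁‖ ^ 2 ≤ moreau f l₂ x₂ := by
  have hsub := hg₁.inner_le_sub hf hbot (hg₂.ne_top hy) hl₁
  have hexpand : inner ℝ g₁ (x₂ - l₂ • g₂ - (x₁ - l₁ • g₁))
      = inner ℝ g₁ (x₂ - x₁) - l₂ * inner ℝ g₁ g₂ + l₁ * ‖g₁‖ ^ 2 := by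
    have : x₂ - l₂ • g₂ - (x₁ - l₁ • g₁) = x₂ - x₁ - l₂ • g₂ + l₁ • g₁ := by abel
    rw [this, inner_add_right, inner_sub_right, real_inner_smul_right, real_inner_smul_right,
      real_inner_self_eq_norm_sq]
  have hslack : 0 ≤ l₂ * (‖g₂‖ ^ 2 - 2 * inner ℝ g₁ g₂ + ‖g₁‖ ^ 2) := by
    rw [real_inner_comm, ← norm_sub_sq_real]
    positivity
  rw [hg₁.moreau_eq hbot hy, hg₂.moreau_eq hbot hy]
  linarith

end IsMoreauGrad

-- Squeeze between an affine minorant and the value of the infimand at the fixed point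
-- `x t - lam t • g t`, which touch the envelope at time `t` with the same slope.
theorem hasDerivWithinAt_moreau {S : Set ℝ} {lam : ℝ → ℝ} {x g : ℝ → H} {t lam' : ℝ} {v : H}
    (hf : EConvexOn f) (hbot : ∀ y, f y ≠ ⊥) (hy : f y ≠ ⊤) (hlam₀ : ∀ s ∈ S, 0 < lam s)
    (hg : ∀ s ∈ S, IsMoreauGrad f (lam s) (x s) (g s)) (ht : t ∈ S)
    (hlam : HasDerivWithinAt lam lam' S t) (hx : HasDerivWithinAt x v S t) :
    HasDerivWithinAt (fun s => moreau f (lam s) (x s))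
      (inner ℝ (g t) v - lam' / 2 * ‖g t‖ ^ 2) S t := by
  have hlt := hlam₀ t ht
  have hminorant : HasDerivWithinAt (fun s => moreau f (lam t) (x t) + inner ℝ (g t) (x s - x t)
      - (lam s - lam t) / 2 * ‖g t‖ ^ 2) (inner ℝ (g t) v - lam' / 2 * ‖g t‖ ^ 2) S t := by
    have hinner := (hasDerivWithinAt_const t S (g t)).inner ℝ (hx.sub_const (x t))
    rw [inner_zero_left, add_zero] at hinner
    exact (hinner.const_add _).sub (((hlam.sub_const _).div_const 2).mul_const _)
  have hmajorant : HasDerivWithinAt (fun s => (f (x t - lam t • g t)).toReal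
      + ‖x s - (x t - lam t • g t)‖ ^ 2 / (2 * lam s))
      (inner ℝ (g t) v - lam' / 2 * ‖g t‖ ^ 2) S t := by
    refine (((hx.sub_const _).norm_sq.div (hlam.const_mul 2) (by positivity)).const_add
      _).congr_deriv ?_
    rw [sub_sub_cancel, norm_smul, real_inner_smul_left, Real.norm_eq_abs, mul_pow, sq_abs]
    field_simp
  refine hasDerivWithinAt_of_le_of_le hminorant hmajorant ?_ ?_ (by simp) ?_
  · filter_upwards [self_mem_nhdsWithin] with s hs
    exact (hg t ht).moreau_add_inner_sub_le (hg s hs) hf hbot hy hlt.ne' (hlam₀ s hs)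
  · filter_upwards [self_mem_nhdsWithin] with s hs
    exact IsProxPt.moreau_le (hg s hs) hbot ((hg t ht).ne_top hy)
  · exact (IsProxPt.moreau_eq (hg t ht) (hbot _) ((hg t ht).ne_top hy)).symm

end MoreauEnvelope

section Lyapunov

variable {H : Type*} [NormedAddCommGroup H] [InnerProductSpace ℝ H]
  {S : Set ℝ} {α c ε t : ℝ} {β w φ : ℝ → ℝ} {y v g : ℝ → H}

/-- The combination of position `y`, velocity `v` and force `g` whose derivative along the inertial
dynamics involves neither the acceleration nor the derivative of `g`. The position is measured from
a minimizer. -/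
def anchoredMomentum (c : ℝ) (β : ℝ → ℝ) (y v g : ℝ → H) (t : ℝ) : H :=
  c • y t + t • v t + (t * β t) • g t

/-- The Lyapunov function of the inertial dynamics. Here `φ` is the potential of the force `g`,
normalized to have infimum zero, and `w` stands for `b - β' - β / t`. -/
def lyapunovEnergy (c ε : ℝ) (β w φ : ℝ → ℝ) (y v g : ℝ → H) (t : ℝ) : ℝ :=
  (t ^ 2 * w t + ε * (t * β t)) * φ t + 1 / 2 * ‖anchoredMomentum c β y v g t‖ ^ 2
    + c * ε / 2 * ‖y t‖ ^ 2

theorem lyapunovEnergy_nonneg (ht : 0 ≤ t) (hc : 0 ≤ c) (hε : 0 ≤ ε) (hβ : 0 ≤ β t)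
    (hw : 0 ≤ w t) (hφ : 0 ≤ φ t) : 0 ≤ lyapunovEnergy c ε β w φ y v g t := by
  unfold lyapunovEnergy
  positivity

theorem hasDerivWithinAt_anchoredMomentum {β' b : ℝ} {g' : H} (ht : t ≠ 0) (hc : c + ε = α - 1)
    (hβ : HasDerivWithinAt β β' S t) (hy : HasDerivWithinAt y (v t) S t)
    (hv : HasDerivWithinAt v (-((α / t) • v t + β t • g' + b • g t)) S t)
    (hg : HasDerivWithinAt g g' S t) :
    HasDerivWithinAt (anchoredMomentum c β y v g)
      (-ε • v t - (t * (b - β' - β t / t)) • g t) S t := by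
  have hid := hasDerivWithinAt_id t S
  refine (((hy.const_smul c).add (hid.smul hv)).add ((hid.mul hβ).smul hg)).congr_deriv ?_
  obtain rfl : α = c + ε + 1 := by linarith
  simp only [id, Pi.mul_apply]
  match_scalars <;> field_simp <;> ring

theorem hasDerivWithinAt_lyapunovEnergy {β' b w' δ : ℝ} {g' : H} (ht : t ≠ 0)
    (hc : c + ε = α - 1) (hwt : w t = b - β' - β t / t) (hβ : HasDerivWithinAt β β' S t)
    (hw : HasDerivWithinAt w w' S t) (hφ : HasDerivWithinAt φ (inner ℝ (g t) (v t) - δ) S t)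
    (hy : HasDerivWithinAt y (v t) S t)
    (hv : HasDerivWithinAt v (-((α / t) • v t + β t • g' + b • g t)) S t)
    (hg : HasDerivWithinAt g g' S t) :
    HasDerivWithinAt (lyapunovEnergy c ε β w φ y v g)
      ((2 * t * w t + t ^ 2 * w' + ε * t * (b - w t)) * φ t - c * t * w t * inner ℝ (g t) (y t)
        - ε * (t * ‖v t‖ ^ 2) - t ^ 2 * w t * β t * ‖g t‖ ^ 2
        - (t ^ 2 * w t + ε * (t * β t)) * δ) S t := by
  have hid := hasDerivWithinAt_id t S
  have hmomentum := hasDerivWithinAt_anchoredMomentum ht hc hβ hy hv hg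
  rw [← hwt] at hmomentum
  have hcoeff := ((hid.pow 2).mul hw).add ((hid.mul hβ).const_mul ε)
  refine (((hcoeff.mul hφ).add (hmomentum.norm_sq.const_mul (1 / 2))).add
    (hy.norm_sq.const_mul (c * ε / 2))).congr_deriv ?_
  have hb : b = w t + β' + β t / t := by linarith
  simp only [anchoredMomentum, Pi.add_apply, Pi.mul_apply, Pi.pow_apply, id, inner_sub_right,
    inner_add_left, real_inner_smul_left, real_inner_smul_right, real_inner_self_eq_norm_sq,
    real_inner_comm (g t) (y t), real_inner_comm (g t) (v t), hb]
  field_simp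
  ring

-- Since `φ ≤ K`, the terms in `φ` and `K` add up to at most
-- `-(t * φ) * ((α - 3) * w - t * w' - ε * b)`.
theorem lyapunovEnergy_deriv_le {t b β w w' φ δ K V G : ℝ} (ht : 0 ≤ t) (hc : 0 ≤ c)
    (hε : 0 ≤ ε) (hcε : c + ε = α - 1) (hβ : 0 ≤ β) (hw : 0 ≤ w) (hφ : 0 ≤ φ) (hφK : φ ≤ K)
    (hδ : 0 ≤ δ) (hG : 0 ≤ G) (hgrowth : ε * b ≤ (α - 3) * w - t * w') :
    (2 * t * w + t ^ 2 * w' + ε * t * (b - w)) * φ - c * t * w * K - ε * V - t ^ 2 * w * β * G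
      - (t ^ 2 * w + ε * (t * β)) * δ ≤ -(ε * V) := by
  have hconvex : c * t * w * φ ≤ c * t * w * K := by gcongr
  have hrate : 0 ≤ t * φ * ((α - 3) * w - t * w' - ε * b) :=
    mul_nonneg (by positivity) (sub_nonneg.2 hgrowth)
  have hhessian : 0 ≤ t ^ 2 * w * β * G := by positivity
  have hsmoothing : 0 ≤ (t ^ 2 * w + ε * (t * β)) * δ := by positivity
  obtain rfl : α = c + ε + 1 := by linarith
  linarith

theorem integrableOn_mul_norm_velocity_sq {t₀ : ℝ} {β' b w' δ : ℝ → ℝ} {g' : ℝ → H}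
    (ht₀ : 0 < t₀) (hε : 0 < ε) (hεα : ε ≤ α - 1)
    (hβ₀ : ∀ t ≥ t₀, 0 ≤ β t) (hw₀ : ∀ t ≥ t₀, 0 ≤ w t) (hδ₀ : ∀ t ≥ t₀, 0 ≤ δ t)
    (hφ₀ : ∀ t ≥ t₀, 0 ≤ φ t) (hφy : ∀ t ≥ t₀, φ t ≤ inner ℝ (g t) (y t))
    (hwt : ∀ t ≥ t₀, w t = b t - β' t - β t / t)
    (hgrowth : ∀ t ≥ t₀, ε * b t ≤ (α - 3) * w t - t * w' t)
    (hβ : ∀ t ≥ t₀, HasDerivWithinAt β (β' t) (Ici t₀) t)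
    (hw : ∀ t ≥ t₀, HasDerivWithinAt w (w' t) (Ici t₀) t)
    (hφ : ∀ t ≥ t₀, HasDerivWithinAt φ (inner ℝ (g t) (v t) - δ t) (Ici t₀) t)
    (hy : ∀ t ≥ t₀, HasDerivWithinAt y (v t) (Ici t₀) t)
    (hv : ∀ t ≥ t₀,
      HasDerivWithinAt v (-((α / t) • v t + β t • g' t + b t • g t)) (Ici t₀) t)
    (hg : ∀ t ≥ t₀, HasDerivWithinAt g (g' t) (Ici t₀) t) :
    IntegrableOn (fun t => t * ‖v t‖ ^ 2) (Ici t₀) := by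
  have hpos (t : ℝ) (ht : t ≥ t₀) : 0 < t := ht₀.trans_le ht
  have hc : 0 ≤ α - 1 - ε := sub_nonneg.2 hεα
  have hcε : α - 1 - ε + ε = α - 1 := sub_add_cancel _ _
  have hvcont : ContinuousOn v (Ici t₀) := fun t ht => (hv t ht).continuousWithinAt
  have hcont : ContinuousOn (fun t => ε * (t * ‖v t‖ ^ 2)) (Ici t₀) := by fun_prop
  have hint : IntegrableOn (fun t => ε * (t * ‖v t‖ ^ 2)) (Ici t₀) := by
    refine integrableOn_Ici_of_le_neg_deriv
      (fun t ht => hasDerivWithinAt_lyapunovEnergy (hpos t ht).ne' hcε (hwt t ht) (hβ t ht)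
        (hw t ht) (hφ t ht) (hy t ht) (hv t ht) (hg t ht))
      (fun t ht => lyapunovEnergy_nonneg (hpos t ht).le hc hε.le (hβ₀ t ht) (hw₀ t ht) (hφ₀ t ht))
      (hcont.locallyIntegrableOn measurableSet_Ici) (fun t ht => ?_) (fun t ht => ?_)
    · have := hpos t ht
      positivity
    · exact le_neg_of_le_neg <| lyapunovEnergy_deriv_le (hpos t ht).le hc hε.le hcε (hβ₀ t ht)
        (hw₀ t ht) (hφ₀ t ht) (hφy t ht) (hδ₀ t ht) (sq_nonneg _) (hgrowth t ht)
  exact (integrable_const_mul_iff hε.ne'.isUnit _).1 hint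

end Lyapunov

theorem velocity_integral_finite_general
    {H : Type*} [NormedAddCommGroup H] [InnerProductSpace ℝ H] {Φ : H → EReal} {z : H}
    {t₀ α ε : ℝ} {β b lam β' lam' w' : ℝ → ℝ} {x v acc p G' : ℝ → H}
    (hΦbot : ∀ y, Φ y ≠ ⊥) (hΦproper : ∃ y, Φ y ≠ ⊤) (hΦconv : EConvexOn Φ)
    (hz : ∀ y, Φ z ≤ Φ y) (ht₀ : 0 < t₀)
    (hβnonneg : ∀ t ≥ t₀, 0 ≤ β t)
    (hlampos : ∀ t ≥ t₀, 0 < lam t)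
    (hβ' : ∀ t ≥ t₀, HasDerivAt β (β' t) t)
    (hlam' : ∀ t ≥ t₀, HasDerivAt lam (lam' t) t)
    (hw' : ∀ t ≥ t₀, HasDerivAt (fun s => b s - β' s - β s / s) (w' t) t)
    (hx : ∀ t ≥ t₀, HasDerivAt x (v t) t)
    (hv : ∀ t ≥ t₀, HasDerivAt v (acc t) t)
    (hp : ∀ t ≥ t₀, IsProxPt Φ (lam t) (x t) (p t))
    (hG' : ∀ t ≥ t₀, HasDerivAt (fun s => (lam s)⁻¹ • (x s - p s)) (G' t) t)
    (hode : ∀ t ≥ t₀, acc t + (α / t) • v t + β t • G' t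
        + b t • ((lam t)⁻¹ • (x t - p t)) = 0)
    (hlammono : MonotoneOn lam (Ici t₀))
    (hw : ∀ t ≥ t₀, β' t + β t / t ≤ b t)
    (hε : 0 < ε) (hεα : ε ≤ α - 1)
    (hgrowth : ∀ t ≥ t₀, ε * b t ≤ (α - 3) * (b t - β' t - β t / t) - t * w' t) :
    IntegrableOn (fun t => t * ‖v t‖ ^ 2) (Ici t₀) := by
  have hztop : Φ z ≠ ⊤ := hΦproper.elim fun y hy => ne_top_of_le_ne_top hy (hz y)
  have hgrad (t : ℝ) (ht : t ≥ t₀) : IsMoreauGrad Φ (lam t) (x t) ((lam t)⁻¹ • (x t - p t)) :=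
    (hp t ht).isMoreauGrad (hlampos t ht).ne'
  have hlam'₀ (t : ℝ) (ht : t ≥ t₀) : 0 ≤ lam' t := by
    rw [← (hlam' t ht).hasDerivWithinAt.derivWithin (uniqueDiffOn_Ici t₀ t ht)]
    exact hlammono.derivWithin_nonneg
  have hacc (t : ℝ) (ht : t ≥ t₀) :
      acc t = -((α / t) • v t + β t • G' t + b t • ((lam t)⁻¹ • (x t - p t))) := by
    rw [eq_neg_iff_add_eq_zero, ← hode t ht]
    abel
  exact integrableOn_mul_norm_velocity_sq (y := fun t => x t - z)
    (φ := fun t => moreau Φ (lam t) (x t) - (Φ z).toReal) ht₀ hε hεα hβnonneg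
    (fun t ht => by linarith [hw t ht])
    (fun t ht => mul_nonneg (div_nonneg (hlam'₀ t ht) zero_le_two) (sq_nonneg _))
    (fun t ht => sub_nonneg.2 ((hgrad t ht).le_moreau hΦbot (hlampos t ht) hz hztop))
    (fun t ht => (hgrad t ht).moreau_sub_le_inner hΦconv hΦbot hztop (hlampos t ht))
    (fun _ _ => rfl) hgrowth (fun t ht => (hβ' t ht).hasDerivWithinAt)
    (fun t ht => (hw' t ht).hasDerivWithinAt)
    (fun t ht => (hasDerivWithinAt_moreau hΦconv hΦbot hztop hlampos hgrad ht
      (hlam' t ht).hasDerivWithinAt (hx t ht).hasDerivWithinAt).sub_const _)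
    (fun t ht => ((hx t ht).sub_const z).hasDerivWithinAt)
    (fun t ht => hacc t ht ▸ (hv t ht).hasDerivWithinAt)
    (fun t ht => (hG' t ht).hasDerivWithinAt)

theorem velocity_integral_finite
    {H : Type*} [NormedAddCommGroup H] [InnerProductSpace ℝ H] [CompleteSpace H]
    (Φ : H → EReal)
    (hΦbot : ∀ y, Φ y ≠ ⊥) (hΦproper : ∃ y, Φ y ≠ ⊤)
    (hΦconv : EConvexOn Φ) (hΦlsc : LowerSemicontinuous Φ)
    (t₀ α : ℝ) (ht₀ : 0 < t₀)
    (β b lam β' b' lam' w' : ℝ → ℝ)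
    (hβnonneg : ∀ t ≥ t₀, 0 ≤ β t)
    (hbpos : ∀ t ≥ t₀, 0 < b t)
    (hlampos : ∀ t ≥ t₀, 0 < lam t)
    (hβ' : ∀ t ≥ t₀, HasDerivAt β (β' t) t)
    (hb' : ∀ t ≥ t₀, HasDerivAt b (b' t) t)
    (hlam' : ∀ t ≥ t₀, HasDerivAt lam (lam' t) t)
    (hw' : ∀ t ≥ t₀, HasDerivAt (fun s => b s - β' s - β s / s) (w' t) t)
    (x v acc p G' : ℝ → H)
    (hx : ∀ t ≥ t₀, HasDerivAt x (v t) t)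
    (hv : ∀ t ≥ t₀, HasDerivAt v (acc t) t)
    (hp : ∀ t ≥ t₀, IsProxPt Φ (lam t) (x t) (p t))
    (hG' : ∀ t ≥ t₀, HasDerivAt (fun s => (lam s)⁻¹ • (x s - p s)) (G' t) t)
    (hode : ∀ t ≥ t₀, acc t + (α / t) • v t + β t • G' t
        + b t • ((lam t)⁻¹ • (x t - p t)) = 0)
    (hα : 1 < α)
    (hlammono : MonotoneOn lam (Set.Ici t₀))
    (hw : ∀ t ≥ t₀, β' t + β t / t < b t)
    (hAs2 : ∃ ε, 0 < ε ∧ ε < α - 1 ∧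
      ∀ t ≥ t₀, ε * b t ≤ (α - 3) * (b t - β' t - β t / t) - t * w' t)
    (hargmin : ∃ z, ∀ y, Φ z ≤ Φ y)
    :
    ∫⁻ t in Set.Ici t₀, ENNReal.ofReal (t * ‖v t‖ ^ 2) < ⊤ := by
  obtain ⟨ε, hε, hεα, hgrowth⟩ := hAs2
  obtain ⟨z, hz⟩ := hargmin
  exact (velocity_integral_finite_general hΦbot hΦproper hΦconv hz ht₀ hβnonneg hlampos hβ' hlam'
    hw' hx hv hp hG' hode hlammono (fun t ht => (hw t ht).le) hε hεα.le hgrowth).lintegral_lt_top
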